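/- arXiv:2206.09568 — 4 statements merged into one kernel-verified Lean document; each statement's English description precedes it below -/
import Mathlib

section
/- Let (ρ, m, E, B) be a solution of the monolithic-regularized ideal MHD system on ℝ^d × (0,∞) with ρ > 0, twice continuously differentiable in space and continuously differentiable in time, and assume ∇·B = 0. Then, with u := m/ρ and e := (E − ρ|u|²/2 − |B|²/2)/ρ, the internal energy balance ρ(∂_t e + u·∇e) + (e − |u|²/2) εΔρ + p (∇·u) − εΔE + ε u·Δm + ε B·ΔB = 0 holds at every point. -/
open scoped BigOperators

/-- Spatial partial derivative `∂_i f (x)` of a scalar field on `ℝ^d`. -/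
noncomputable def spd {d : ℕ} (f : (Fin d → ℝ) → ℝ) (i : Fin d) (x : Fin d → ℝ) : ℝ :=
  fderiv ℝ f x (Pi.single i 1)

/-- Laplacian `Δf(x) = ∑ᵢ ∂ᵢ∂ᵢ f (x)` of a scalar field on `ℝ^d`. -/
noncomputable def slap {d : ℕ} (f : (Fin d → ℝ) → ℝ) (x : Fin d → ℝ) : ℝ :=
  ∑ i, spd (spd f i) i x

/-- The Maxwell stress tensor `𝒯 = B ⊗ B − (|B|²/2) I` built from a vector `B ∈ ℝ^d`. -/
noncomputable def maxwellT {d : ℕ} (B : Fin d → ℝ) (i j : Fin d) : ℝ :=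
  B i * B j - (if i = j then (∑ k, (B k) ^ 2) / 2 else 0)

/-- Specific internal energy `e = (E − ρ|u|²/2 − |B|²/2)/ρ` with `u = m/ρ`,
as a space-time field. -/
noncomputable def specE {d : ℕ} (ρ E : (Fin d → ℝ) → ℝ → ℝ)
    (m B : (Fin d → ℝ) → ℝ → Fin d → ℝ) (x : Fin d → ℝ) (t : ℝ) : ℝ :=
  (E x t - ρ x t * (∑ i, (m x t i / ρ x t) ^ 2) / 2 - (∑ i, (B x t i) ^ 2) / 2) / ρ x t

/-- `f` is differentiable at `x` and its derivative along `v` is `a`. -/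
def HasD {X : Type*} [NormedAddCommGroup X] [NormedSpace ℝ X]
    (f : X → ℝ) (x v : X) (a : ℝ) : Prop :=
  ∃ f' : X →L[ℝ] ℝ, HasFDerivAt f f' x ∧ f' v = a

section HasDRules
variable {X : Type*} [NormedAddCommGroup X] [NormedSpace ℝ X]

theorem HasD.of_diff {f : X → ℝ} {x v : X} (h : DifferentiableAt ℝ f x) :
    HasD f x v (fderiv ℝ f x v) := ⟨_, h.hasFDerivAt, rfl⟩

theorem HasD.unique {f : X → ℝ} {x v : X} {a b : ℝ} (h : HasD f x v a) (h' : HasD f x v b) :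
    a = b := by
  obtain ⟨f', h1, rfl⟩ := h
  obtain ⟨g', h2, rfl⟩ := h'
  rw [h1.unique h2]

theorem HasD.add {f g : X → ℝ} {x v : X} {a b : ℝ} (h : HasD f x v a) (h' : HasD g x v b) :
    HasD (fun y => f y + g y) x v (a + b) := by
  obtain ⟨f', h1, rfl⟩ := h
  obtain ⟨g', h2, rfl⟩ := h'
  exact ⟨_, h1.add h2, by simp⟩

theorem HasD.sub {f g : X → ℝ} {x v : X} {a b : ℝ} (h : HasD f x v a) (h' : HasD g x v b) :
    HasD (fun y => f y - g y) x v (a - b) := by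
  obtain ⟨f', h1, rfl⟩ := h
  obtain ⟨g', h2, rfl⟩ := h'
  exact ⟨_, h1.sub h2, by simp⟩

theorem HasD.mul {f g : X → ℝ} {x v : X} {a b : ℝ} (h : HasD f x v a) (h' : HasD g x v b) :
    HasD (fun y => f y * g y) x v (f x * b + g x * a) := by
  obtain ⟨f', h1, rfl⟩ := h
  obtain ⟨g', h2, rfl⟩ := h'
  exact ⟨_, h1.mul h2, by simp⟩

theorem HasD.const (c : ℝ) (x v : X) : HasD (fun _ => c) x v 0 :=
  ⟨_, hasFDerivAt_const c x, by simp⟩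

theorem HasD.sum {ι : Type*} [Fintype ι] {f : ι → X → ℝ} {x v : X} {a : ι → ℝ}
    (h : ∀ i, HasD (f i) x v (a i)) : HasD (fun y => ∑ i, f i y) x v (∑ i, a i) := by
  choose f' h1 h2 using h
  refine ⟨∑ i, f' i, HasFDerivAt.fun_sum fun i _ => h1 i, ?_⟩
  simp [h2]

theorem HasD.sumsq {ι : Type*} [Fintype ι] {f : X → ι → ℝ} {x v : X} {a : ι → ℝ}
    (h : ∀ i, HasD (fun y => f y i) x v (a i)) :
    HasD (fun y => (∑ i, f y i ^ 2) / 2) x v (∑ i, f x i * a i) := by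
  have h1 := (HasD.sum fun i => (h i).mul (h i)).mul (HasD.const (1/2) x v)
  convert h1 using 1
  · funext y
    rw [div_eq_mul_one_div]
    simp only [sq]
  · rw [mul_zero, zero_add, Finset.mul_sum]
    exact Finset.sum_congr rfl fun i _ => by ring

/-- Product rule for `ρ e`, solved for the derivative of `e`. -/
theorem HasD.energy {ι : Type*} [Fintype ι] {R E : X → ℝ} {m B u : X → ι → ℝ} {x v : X}
    {r e : ℝ} {U b : ι → ℝ} (hR0 : ∀ y, 0 < R y) (hu0 : ∀ y i, u y i = m y i / R y)
    (hR : HasD R x v r) (hE : HasD E x v e) (hu : ∀ i, HasD (fun y => u y i) x v (U i))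
    (hB : ∀ i, HasD (fun y => B y i) x v (b i)) (w : ℝ)
    (hd : DifferentiableAt ℝ (fun y => (E y - R y * (∑ i, (m y i / R y) ^ 2) / 2
      - (∑ i, (B y i) ^ 2) / 2) / R y) x)
    (hw : fderiv ℝ (fun y => (E y - R y * (∑ i, (m y i / R y) ^ 2) / 2
      - (∑ i, (B y i) ^ 2) / 2) / R y) x v = w) :
    R x * w = e - r * ((∑ i, u x i ^ 2) / 2) - R x * (∑ i, u x i * U i) - (∑ i, B x i * b i)
      - r * ((E x - R x * (∑ i, (m x i / R x) ^ 2) / 2 - (∑ i, (B x i) ^ 2) / 2) / R x) := by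
  have h1 := hR.mul (HasD.of_diff (v := v) hd)
  rw [hw] at h1
  have h2 := (hE.sub (hR.mul (HasD.sumsq hu))).sub (HasD.sumsq hB)
  have h3 : (fun y => R y * ((E y - R y * (∑ i, (m y i / R y) ^ 2) / 2
      - (∑ i, (B y i) ^ 2) / 2) / R y)) = fun y => E y - R y * ((∑ i, u y i ^ 2) / 2)
      - (∑ i, (B y i) ^ 2) / 2 := by
    funext y
    rw [mul_div_cancel₀ _ (hR0 y).ne']
    simp only [hu0]
    ring
  rw [h3] at h1
  have := h1.unique h2
  linarith

end HasDRules

/-- The algebraic identity behind the internal energy balance. -/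
theorem mhd_algebra {d : ℕ} (R E P rt Et Lr LE e w : ℝ) (u B mt ut Bt r Ed pd Lm LB ed: Fin d → ℝ)
    (U b : Fin d → Fin d → ℝ)
    (hE : R * e = E - R * ((∑ i, u i ^ 2) / 2) - (∑ i, B i ^ 2) / 2)
    (hmt : ∀ i, mt i = R * ut i + u i * rt)
    (hw : R * w = Et - rt * ((∑ i, u i ^ 2) / 2) - R * (∑ i, u i * ut i) - (∑ i, B i * Bt i)
      - rt * e)
    (hed : ∀ j, R * ed j = Ed j - r j * ((∑ i, u i ^ 2) / 2) - R * (∑ i, u i * U i j)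
      - (∑ i, B i * b i j) - r j * e)
    (hdiv : ∑ j, b j j = 0)
    (hmass : rt + ∑ j, (R * U j j + u j * r j) = Lr)
    (hmom : ∀ i, mt i + ∑ j, ((R * u i) * U j j + u j * (R * U i j + u i * r j)
      + (if i = j then pd j else 0)
      - (B i * b j j + B j * b i j - (if i = j then ∑ k, B k * b k j else 0))) = Lm i)
    (hener : Et + ∑ j, (u j * (Ed j + pd j) + (E + P) * U j j
      - ∑ k, (u k * (B k * b j j + B j * b k j - (if k = j then ∑ l, B l * b l j else 0))
        + (B k * B j - (if k = j then (∑ l, B l ^ 2) / 2 else 0)) * U k j)) = LE)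
    (hind : ∀ i, Bt i + ∑ j, (u j * b i j + B i * U j j - (B j * U i j + u i * b j j)) = LB i) :
    R * (w + ∑ i, u i * ed i) + (e - (∑ i, u i ^ 2) / 2) * Lr + P * (∑ j, U j j) - LE
      + (∑ i, u i * Lm i) + (∑ i, B i * LB i) = 0 := by
  have hmass' : rt + (R * (∑ j, U j j) + ∑ j, u j * r j) = Lr := by
    rw [← hmass, Finset.sum_add_distrib, Finset.mul_sum]
  have hmom' : ∀ i, Lm i = R * ut i + u i * rt + (R * u i * (∑ j, U j j)
      + R * (∑ j, u j * U i j) + u i * (∑ j, u j * r j) + pd i - (∑ j, B j * b i j)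
      + ∑ k, B k * b k i) := by
    intro i
    rw [← hmom i, hmt i]
    simp only [Finset.sum_add_distrib, Finset.sum_sub_distrib, Finset.sum_ite_eq, Finset.mem_univ,
      if_true, ← Finset.mul_sum, hdiv, mul_add]
    have h1 : ∑ j, u j * (R * U i j) = R * ∑ j, u j * U i j := by
      rw [Finset.mul_sum]; exact Finset.sum_congr rfl fun j _ => by ring
    have h2 : ∑ j, u j * (u i * r j) = u i * ∑ j, u j * r j := by
      rw [Finset.mul_sum]; exact Finset.sum_congr rfl fun j _ => by ring
    rw [h1, h2]; ring
  have hind' : ∀ i, LB i = Bt i + ((∑ j, u j * b i j) + B i * (∑ j, U j j)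
      - ∑ j, B j * U i j) := by
    intro i
    rw [← hind i]
    simp only [Finset.sum_add_distrib, Finset.sum_sub_distrib, ← Finset.mul_sum, hdiv]
    ring
  have hk : ∀ j, ∑ k, (u k * (B k * b j j + B j * b k j - (if k = j then ∑ l, B l * b l j else 0))
        + (B k * B j - (if k = j then (∑ l, B l ^ 2) / 2 else 0)) * U k j)
      = (∑ k, u k * B k) * b j j + (∑ k, u k * (B j * b k j)) - u j * (∑ l, B l * b l j)
        + (∑ k, B k * (B j * U k j)) - (∑ l, B l ^ 2) / 2 * U j j := by
    intro j
    simp only [mul_add, mul_sub, sub_mul, Finset.sum_add_distrib, Finset.sum_sub_distrib, mul_ite,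
      ite_mul, zero_mul, mul_zero, Finset.sum_ite_eq', Finset.mem_univ, if_true, Finset.sum_mul,
      mul_assoc]
    ring
  have hener' : LE = Et + ((∑ j, u j * Ed j) + (∑ j, u j * pd j) + (E + P) * (∑ j, U j j)
      - (∑ k, ∑ j, u k * (B j * b k j)) + (∑ j, u j * (∑ l, B l * b l j))
        - (∑ k, ∑ j, B k * (B j * U k j)) + (∑ l, B l ^ 2) / 2 * (∑ j, U j j)) := by
    rw [← hener]
    simp only [hk]
    rw [Finset.sum_comm (f := fun k j => u k * (B j * b k j)),
      Finset.sum_comm (f := fun k j => B k * (B j * U k j))]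
    simp only [mul_add, Finset.sum_add_distrib, Finset.sum_sub_distrib, ← Finset.mul_sum, hdiv]
    ring
  have hadv : R * (∑ i, u i * ed i) = (∑ j, u j * Ed j)
      - (∑ j, u j * r j) * ((∑ i, u i ^ 2) / 2) - R * (∑ k, ∑ j, u k * (u j * U k j))
      - (∑ k, ∑ j, B k * (u j * b k j)) - (∑ j, u j * r j) * e := by
    rw [Finset.sum_comm (f := fun k j => u k * (u j * U k j)),
      Finset.sum_comm (f := fun k j => B k * (u j * b k j))]
    rw [Finset.mul_sum _ _ R, Finset.mul_sum _ _ R]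
    simp only [Finset.sum_mul, ← Finset.sum_sub_distrib]
    refine Finset.sum_congr rfl fun j _ => ?_
    have h1 : R * (u j * ed j) = u j * (R * ed j) := by ring
    have h2 : ∑ i, u i * (u j * U i j) = u j * ∑ i, u i * U i j := by
      rw [Finset.mul_sum]; exact Finset.sum_congr rfl fun i _ => by ring
    have h3 : ∑ i, B i * (u j * b i j) = u j * ∑ i, B i * b i j := by
      rw [Finset.mul_sum]; exact Finset.sum_congr rfl fun i _ => by ring
    rw [h1, hed j]
    rw [h2, h3]
    ring
  have hm : ∑ i, u i * Lm i = R * (∑ i, u i * ut i) + (∑ i, u i ^ 2) * rt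
      + R * (∑ i, u i ^ 2) * (∑ j, U j j) + R * (∑ k, ∑ j, u k * (u j * U k j))
      + (∑ i, u i ^ 2) * (∑ j, u j * r j) + (∑ j, u j * pd j)
      - (∑ k, ∑ j, u k * (B j * b k j)) + (∑ j, u j * (∑ l, B l * b l j)) := by
    simp only [← Finset.mul_sum]
    rw [Finset.mul_sum _ _ R, Finset.mul_sum _ _ R, Finset.mul_sum _ _ R]
    simp only [Finset.sum_mul, ← Finset.sum_sub_distrib, ← Finset.sum_add_distrib]
    refine Finset.sum_congr rfl fun i _ => ?_
    rw [hmom' i]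
    ring
  have hb : ∑ i, B i * LB i = (∑ i, B i * Bt i) + (∑ k, ∑ j, B k * (u j * b k j))
      + (∑ i, B i ^ 2) * (∑ j, U j j) - (∑ k, ∑ j, B k * (B j * U k j)) := by
    simp only [← Finset.mul_sum]
    rw [Finset.sum_mul]
    simp only [← Finset.sum_sub_distrib, ← Finset.sum_add_distrib]
    refine Finset.sum_congr rfl fun i _ => ?_
    rw [hind' i]
    ring
  rw [mul_add, hw, hadv, hm, hb, hener', ← hmass']
  linear_combination (∑ j, U j j) * hE

/-- for smooth positive-density solutions of the monolithic-regularized ideal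
MHD system with `∇·B = 0`, the internal energy balance
`ρ(∂ₜe + u·∇e) + (e − |u|²/2)εΔρ + p(∇·u) − εΔE + εu·Δm + εB·ΔB = 0` holds pointwise. -/
theorem stmt_5 {d : ℕ} (hd : 1 ≤ d) (ε : ℝ) (hε : 0 < ε)
    (ρ E p : (Fin d → ℝ) → ℝ → ℝ) (m B : (Fin d → ℝ) → ℝ → Fin d → ℝ)
    (hρpos : ∀ x t, 0 < ρ x t)
    (hρx : ∀ t, ContDiff ℝ 2 fun x => ρ x t) (hρt : ∀ x, ContDiff ℝ 1 fun t => ρ x t)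
    (hmx : ∀ t i, ContDiff ℝ 2 fun x => m x t i) (hmt : ∀ x i, ContDiff ℝ 1 fun t => m x t i)
    (hEx : ∀ t, ContDiff ℝ 2 fun x => E x t) (hEt : ∀ x, ContDiff ℝ 1 fun t => E x t)
    (hBx : ∀ t i, ContDiff ℝ 2 fun x => B x t i) (hBt : ∀ x i, ContDiff ℝ 1 fun t => B x t i)
    (hpx : ∀ t, ContDiff ℝ 1 fun x => p x t)
    (hdivB : ∀ (x : Fin d → ℝ) (t : ℝ), 0 < t → (∑ j, spd (fun y => B y t j) j x) = 0)
    (hmass : ∀ (x : Fin d → ℝ) (t : ℝ), 0 < t →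
      deriv (fun τ => ρ x τ) t + (∑ j, spd (fun y => m y t j) j x)
        = ε * slap (fun y => ρ y t) x)
    (hmom : ∀ (x : Fin d → ℝ) (t : ℝ), 0 < t → ∀ i,
      deriv (fun τ => m x τ i) t
        + (∑ j, spd (fun y => m y t i * (m y t j / ρ y t)
            + (if i = j then p y t else 0) - maxwellT (B y t) i j) j x)
        = ε * slap (fun y => m y t i) x)
    (hener : ∀ (x : Fin d → ℝ) (t : ℝ), 0 < t →
      deriv (fun τ => E x τ) t
        + (∑ j, spd (fun y => (m y t j / ρ y t) * (E y t + p y t)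
            - ∑ k, (m y t k / ρ y t) * maxwellT (B y t) k j) j x)
        = ε * slap (fun y => E y t) x)
    (hind : ∀ (x : Fin d → ℝ) (t : ℝ), 0 < t → ∀ i,
      deriv (fun τ => B x τ i) t
        + (∑ j, spd (fun y => (m y t j / ρ y t) * B y t i - B y t j * (m y t i / ρ y t)) j x)
        = ε * slap (fun y => B y t i) x) :
    ∀ (x : Fin d → ℝ) (t : ℝ), 0 < t →
      ρ x t * (deriv (fun τ => specE ρ E m B x τ) t
          + ∑ i, (m x t i / ρ x t) * spd (fun y => specE ρ E m B y t) i x)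
        + (specE ρ E m B x t - (∑ i, (m x t i / ρ x t) ^ 2) / 2)
            * (ε * slap (fun y => ρ y t) x)
        + p x t * (∑ j, spd (fun y => m y t j / ρ y t) j x)
        - ε * slap (fun y => E y t) x
        + ε * (∑ i, (m x t i / ρ x t) * slap (fun y => m y t i) x)
        + ε * (∑ i, B x t i * slap (fun y => B y t i) x) = 0 := by
  intro x t ht
  have hne : ∀ y s, ρ y s ≠ 0 := fun y s => (hρpos y s).ne'
  have dρx : ∀ y, DifferentiableAt ℝ (fun y => ρ y t) y := fun y =>
    ((hρx t).differentiable (by norm_num)) y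
  have dEx : DifferentiableAt ℝ (fun y => E y t) x := ((hEx t).differentiable (by norm_num)) x
  have dpx : DifferentiableAt ℝ (fun y => p y t) x := ((hpx t).differentiable (by norm_num)) x
  have dmx : ∀ i, DifferentiableAt ℝ (fun y => m y t i) x := fun i =>
    ((hmx t i).differentiable (by norm_num)) x
  have dBx : ∀ i, DifferentiableAt ℝ (fun y => B y t i) x := fun i =>
    ((hBx t i).differentiable (by norm_num)) x
  have dρt : DifferentiableAt ℝ (fun s => ρ x s) t := ((hρt x).differentiable (by norm_num)) t
  have dEt : DifferentiableAt ℝ (fun s => E x s) t := ((hEt x).differentiable (by norm_num)) t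
  have dmt : ∀ i, DifferentiableAt ℝ (fun s => m x s i) t := fun i =>
    ((hmt x i).differentiable (by norm_num)) t
  have dBt : ∀ i, DifferentiableAt ℝ (fun s => B x s i) t := fun i =>
    ((hBt x i).differentiable (by norm_num)) t
  have dux : ∀ i, DifferentiableAt ℝ (fun y => m y t i / ρ y t) x := fun i =>
    by
    have h0 := dρx x
    have h1 := dmx i
    have h2 := hne x t
    fun_prop (disch := assumption)
  have dut : ∀ i, DifferentiableAt ℝ (fun s => m x s i / ρ x s) t := fun i =>
    (dmt i).fun_div dρt (hne x t)
  have dex : DifferentiableAt ℝ (fun y => specE ρ E m B y t) x := by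
    unfold specE
    have h1 := hne x t
    have h0 := dρx x
    fun_prop (disch := assumption)
  have det : DifferentiableAt ℝ (fun s => specE ρ E m B x s) t := by
    unfold specE
    have h1 := hne x t
    fun_prop (disch := assumption)
  -- abbreviations for the derivatives
  have Hρ : ∀ j, HasD (fun y => ρ y t) x (Pi.single j 1) (spd (fun y => ρ y t) j x) :=
    fun j => HasD.of_diff (dρx x)
  have HE : ∀ j, HasD (fun y => E y t) x (Pi.single j 1) (spd (fun y => E y t) j x) :=
    fun j => HasD.of_diff dEx
  have Hp : ∀ j, HasD (fun y => p y t) x (Pi.single j 1) (spd (fun y => p y t) j x) :=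
    fun j => HasD.of_diff dpx
  have Hu : ∀ i j, HasD (fun y => m y t i / ρ y t) x (Pi.single j 1)
      (spd (fun y => m y t i / ρ y t) j x) := fun i j => HasD.of_diff (dux i)
  have HB : ∀ i j, HasD (fun y => B y t i) x (Pi.single j 1)
      (spd (fun y => B y t i) j x) := fun i j => HasD.of_diff (dBx i)
  have Hm : ∀ i j, HasD (fun y => m y t i) x (Pi.single j 1)
      (ρ x t * spd (fun y => m y t i / ρ y t) j x
        + m x t i / ρ x t * spd (fun y => ρ y t) j x) := by
    intro i j
    have h := (Hρ j).mul (Hu i j)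
    have h3 : (fun y => ρ y t * (m y t i / ρ y t)) = fun y => m y t i := by
      funext y
      rw [mul_div_cancel₀ _ (hne y t)]
    rwa [h3] at h
  have spd_of : ∀ {f : (Fin d → ℝ) → ℝ} {j : Fin d} {a : ℝ},
      HasD f x (Pi.single j 1) a → spd f j x = a := by
    rintro f j a ⟨f', h1, h2⟩
    rw [← h2, spd, h1.fderiv]
  have HT : ∀ i j, HasD (fun y => maxwellT (B y t) i j) x (Pi.single j 1)
      (B x t i * spd (fun y => B y t j) j x + B x t j * spd (fun y => B y t i) j x
        - (if i = j then ∑ k, B x t k * spd (fun y => B y t k) j x else 0)) := by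
    intro i j
    unfold maxwellT
    refine ((HB i j).mul (HB j j)).sub ?_
    split_ifs
    · exact HasD.sumsq fun k => HB k j
    · exact HasD.const 0 _ _
  have td : ∀ {f : ℝ → ℝ}, DifferentiableAt ℝ f t → HasD f t 1 (deriv f t) := by
    intro f hf
    exact ⟨_, hf.hasFDerivAt, by simp⟩
  have key := mhd_algebra (d := d) (ρ x t) (E x t) (p x t) (deriv (fun s => ρ x s) t)
    (deriv (fun s => E x s) t) (ε * slap (fun y => ρ y t) x) (ε * slap (fun y => E y t) x)
    (specE ρ E m B x t) (deriv (fun s => specE ρ E m B x s) t)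
    (fun i => m x t i / ρ x t) (fun i => B x t i) (fun i => deriv (fun s => m x s i) t)
    (fun i => deriv (fun s => m x s i / ρ x s) t) (fun i => deriv (fun s => B x s i) t)
    (fun j => spd (fun y => ρ y t) j x) (fun j => spd (fun y => E y t) j x)
    (fun j => spd (fun y => p y t) j x) (fun i => ε * slap (fun y => m y t i) x)
    (fun i => ε * slap (fun y => B y t i) x) (fun j => spd (fun y => specE ρ E m B y t) j x)
    (fun i j => spd (fun y => m y t i / ρ y t) j x) (fun i j => spd (fun y => B y t i) j x)
    ?_ ?_ ?_ ?_ (hdivB x t ht) ?_ ?_ ?_ ?_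
  · rw [← key, Finset.mul_sum _ _ ε, Finset.mul_sum _ _ ε]
    simp only [mul_left_comm ε]
  · unfold specE
    rw [mul_div_cancel₀ _ (hne x t)]
    ring
  · intro i
    have h := (td dρt).mul (td (dut i))
    have h3 : (fun s => ρ x s * (m x s i / ρ x s)) = fun s => m x s i := by
      funext s
      rw [mul_div_cancel₀ _ (hne x s)]
    rw [h3] at h
    exact (td (dmt i)).unique h
  · exact HasD.energy (R := fun s => ρ x s) (E := fun s => E x s) (m := fun s => m x s)
      (B := fun s => B x s) (u := fun s i => m x s i / ρ x s) (v := 1) (hρpos x)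
      (fun _ _ => rfl) (td dρt) (td dEt) (fun i => td (dut i)) (fun i => td (dBt i)) _ det
      (by rw [← fderiv_apply_one_eq_deriv]; rfl)
  · intro j
    exact HasD.energy (R := fun y => ρ y t) (E := fun y => E y t) (m := fun y => m y t)
      (B := fun y => B y t) (u := fun y i => m y t i / ρ y t) (fun y => hρpos y t)
      (fun _ _ => rfl) (Hρ j) (HE j) (fun i => Hu i j) (fun i => HB i j) _ dex rfl
  · rw [← hmass x t ht]
    congr 1
    exact Finset.sum_congr rfl fun j _ => (spd_of (Hm j j)).symm
  · intro i
    rw [← hmom x t ht i]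
    congr 1
    refine Finset.sum_congr rfl fun j _ => ?_
    have hp' : HasD (fun y => if i = j then p y t else 0) x (Pi.single j 1)
        (if i = j then spd (fun y => p y t) j x else 0) := by
      split_ifs
      · exact Hp j
      · exact HasD.const 0 _ _
    rw [spd_of ((((Hm i j).mul (Hu j j)).add hp').sub (HT i j))]
    rw [mul_div_cancel₀ _ (hne x t)]
  · rw [← hener x t ht]
    congr 1
    refine Finset.sum_congr rfl fun j _ => ?_
    rw [spd_of (((Hu j j).mul ((HE j).add (Hp j))).sub
      (HasD.sum fun k => (Hu k j).mul (HT k j)))]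
    rfl
  · intro i
    rw [← hind x t ht i]
    congr 1
    refine Finset.sum_congr rfl fun j _ => ?_
    rw [spd_of (((Hu j j).mul (HB i j)).sub ((HB j j).mul (Hu i j)))]
end

section
/- Let (ρ, m, E, B) be a solution of the monolithic-regularized ideal MHD system on ℝ^d × (0,∞) with ρ > 0, twice continuously differentiable in space and continuously differentiable in time, with ∇·B = 0. Let S : ℝ² → ℝ be twice continuously differentiable with the pressure satisfying the equation of state p·S_e(ρ,e) + ρ²·S_ρ(ρ,e) = 0 pointwise, where e := (E − ρ|u|²/2 − |B|²/2)/ρ and u := m/ρ. Set s(x,t) := S(ρ(x,t), e(x,t)). Then at every point, ρ(∂_t s + u·∇s) − ∇·(ρ ε ∇s) − ε∇ρ · ∇[(e·S_e − ρ·S_ρ)∘(ρ,e)] + ε∇(ρe) · ∇[S_e∘(ρ,e)] − ε ρ S_e(ρ,e) |∇u|² − ε S_e(ρ,e) |∇B|² = 0, where |∇u|² := Σ_{i,j}(∂_j u_i)² and |∇B|² := Σ_{i,j}(∂_j B_i)². -/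
open scoped BigOperators

/-- Partial derivative of `S(ρ,e)` in the first argument `ρ`. -/
noncomputable def Sd1 (S : ℝ × ℝ → ℝ) (q : ℝ × ℝ) : ℝ := fderiv ℝ S q (1, 0)

/-- Partial derivative of `S(ρ,e)` in the second argument `e`. -/
noncomputable def Sd2 (S : ℝ × ℝ → ℝ) (q : ℝ × ℝ) : ℝ := fderiv ℝ S q (0, 1)


section Helpers

variable {d : ℕ}

theorem spd_add' {f g : (Fin d → ℝ) → ℝ} {x : Fin d → ℝ} (hf : DifferentiableAt ℝ f x)
    (hg : DifferentiableAt ℝ g x) (j : Fin d) :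
    spd (fun y => f y + g y) j x = spd f j x + spd g j x := by
  unfold spd; rw [fderiv_fun_add hf hg]; rfl

theorem spd_sub' {f g : (Fin d → ℝ) → ℝ} {x : Fin d → ℝ} (hf : DifferentiableAt ℝ f x)
    (hg : DifferentiableAt ℝ g x) (j : Fin d) :
    spd (fun y => f y - g y) j x = spd f j x - spd g j x := by
  unfold spd; rw [fderiv_fun_sub hf hg]; rfl

theorem spd_mul' {f g : (Fin d → ℝ) → ℝ} {x : Fin d → ℝ} (hf : DifferentiableAt ℝ f x)
    (hg : DifferentiableAt ℝ g x) (j : Fin d) :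
    spd (fun y => f y * g y) j x = f x * spd g j x + g x * spd f j x := by
  unfold spd; rw [fderiv_fun_mul hf hg]; simp

theorem spd_sum' {f : Fin d → (Fin d → ℝ) → ℝ} {x : Fin d → ℝ}
    (hf : ∀ i, DifferentiableAt ℝ (f i) x) (j : Fin d) :
    spd (fun y => ∑ i, f i y) j x = ∑ i, spd (f i) j x := by
  unfold spd; rw [fderiv_fun_sum (fun i _ => hf i)]; simp

theorem spd_cd {f : (Fin d → ℝ) → ℝ} (hf : ContDiff ℝ 2 f) (j : Fin d) :
    ContDiff ℝ 1 (spd f j) := by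
  unfold spd
  exact (hf.fderiv_right (m := 1) (by norm_num)).clm_apply contDiff_const

theorem cd_da {f : (Fin d → ℝ) → ℝ} (hf : ContDiff ℝ 2 f) (x : Fin d → ℝ) :
    DifferentiableAt ℝ f x := (hf.differentiable (by norm_num)) x

theorem spd_da {f : (Fin d → ℝ) → ℝ} (hf : ContDiff ℝ 2 f) (j : Fin d) (x : Fin d → ℝ) :
    DifferentiableAt ℝ (spd f j) x := ((spd_cd hf j).differentiable (by norm_num)) x

theorem slap_add' {f g : (Fin d → ℝ) → ℝ} (hf : ContDiff ℝ 2 f) (hg : ContDiff ℝ 2 g)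
    (x : Fin d → ℝ) : slap (fun y => f y + g y) x = slap f x + slap g x := by
  unfold slap
  rw [← Finset.sum_add_distrib]
  refine Finset.sum_congr rfl fun i _ => ?_
  have h : spd (fun y => f y + g y) i = fun y => spd f i y + spd g i y := by
    funext y; exact spd_add' (cd_da hf y) (cd_da hg y) i
  rw [h, spd_add' (spd_da hf i x) (spd_da hg i x)]

theorem slap_mul' {f g : (Fin d → ℝ) → ℝ} (hf : ContDiff ℝ 2 f) (hg : ContDiff ℝ 2 g)
    (x : Fin d → ℝ) : slap (fun y => f y * g y) x
      = f x * slap g x + 2 * (∑ j, spd f j x * spd g j x) + g x * slap f x := by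
  unfold slap
  simp only [Finset.mul_sum]
  rw [← Finset.sum_add_distrib, ← Finset.sum_add_distrib]
  refine Finset.sum_congr rfl fun i _ => ?_
  have h : spd (fun y => f y * g y) i = fun y => f y * spd g i y + g y * spd f i y := by
    funext y; exact spd_mul' (cd_da hf y) (cd_da hg y) i
  rw [h, spd_add' ((cd_da hf x).fun_mul (spd_da hg i x)) ((cd_da hg x).fun_mul (spd_da hf i x)),
    spd_mul' (cd_da hf x) (spd_da hg i x), spd_mul' (cd_da hg x) (spd_da hf i x)]
  ring

/-- half the square of a vector field -/
noncomputable def hsq (u : Fin d → (Fin d → ℝ) → ℝ) (y : Fin d → ℝ) : ℝ := (∑ i, (u i y) ^ 2) / 2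

theorem hsq_cd {u : Fin d → (Fin d → ℝ) → ℝ} (hu : ∀ i, ContDiff ℝ 2 (u i)) :
    ContDiff ℝ 2 (hsq u) := by
  unfold hsq
  exact (ContDiff.sum fun i _ => (hu i).pow 2).div_const 2

theorem hsq_spd {u : Fin d → (Fin d → ℝ) → ℝ} (hu : ∀ i, ContDiff ℝ 2 (u i)) (j : Fin d)
    (x : Fin d → ℝ) : spd (hsq u) j x = ∑ i, u i x * spd (u i) j x := by
  have h : hsq u = fun y => ∑ i, (1 / 2 * u i y) * u i y := by
    funext y; unfold hsq; rw [Finset.sum_div]; exact Finset.sum_congr rfl fun i _ => by ring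
  rw [h, spd_sum' (f := fun i y => (1 / 2 * u i y) * u i y)
    (fun i => ((cd_da (hu i) x).const_mul _).mul (cd_da (hu i) x))]
  refine Finset.sum_congr rfl fun i _ => ?_
  rw [spd_mul' ((cd_da (hu i) x).const_mul _) (cd_da (hu i) x),
    spd_mul' (differentiableAt_const _) (cd_da (hu i) x)]
  simp [spd]; ring

theorem hsq_slap {u : Fin d → (Fin d → ℝ) → ℝ} (hu : ∀ i, ContDiff ℝ 2 (u i))
    (x : Fin d → ℝ) : slap (hsq u) x
      = (∑ i, ∑ j, (spd (u i) j x) ^ 2) + ∑ i, u i x * slap (u i) x := by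
  rw [Finset.sum_comm]
  unfold slap
  simp only [Finset.mul_sum]
  rw [Finset.sum_comm (f := fun i j => u i x * _), ← Finset.sum_add_distrib]
  refine Finset.sum_congr rfl fun j _ => ?_
  have h : spd (hsq u) j = fun y => ∑ i, u i y * spd (u i) j y := by
    funext y; exact hsq_spd hu j y
  rw [h, spd_sum' (f := fun i y => u i y * spd (u i) j y)
    (fun i => (cd_da (hu i) x).mul (spd_da (hu i) j x)), ← Finset.sum_add_distrib]
  refine Finset.sum_congr rfl fun i _ => ?_
  rw [spd_mul' (cd_da (hu i) x) (spd_da (hu i) j x)]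
  ring

theorem maxwellT_eq (b : Fin d → (Fin d → ℝ) → ℝ) (i j : Fin d) (y : Fin d → ℝ) :
    maxwellT (fun k => b k y) i j = b i y * b j y - (if i = j then hsq b y else 0) := rfl

theorem core (ε : ℝ) (r e p : (Fin d → ℝ) → ℝ) (u b : Fin d → (Fin d → ℝ) → ℝ)
    (hr : ContDiff ℝ 2 r) (he : ContDiff ℝ 2 e) (hp : Differentiable ℝ p)
    (hu : ∀ i, ContDiff ℝ 2 (u i)) (hb : ∀ i, ContDiff ℝ 2 (b i))
    (rt et : ℝ) (ut bt : Fin d → ℝ) (x : Fin d → ℝ)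
    (hdivB : (∑ j, spd (b j) j x) = 0)
    (hmass : rt + (∑ j, spd (fun y => r y * u j y) j x) = ε * slap r x)
    (hmom : ∀ i, (rt * u i x + r x * ut i)
        + (∑ j, spd (fun y => r y * u i y * u j y
            + (if i = j then p y else 0) - maxwellT (fun k => b k y) i j) j x)
        = ε * slap (fun y => r y * u i y) x)
    (hener : (rt * (e x + hsq u x) + r x * (et + ∑ i, u i x * ut i) + ∑ i, b i x * bt i)
        + (∑ j, spd (fun y => u j y * (r y * (e y + hsq u y) + hsq b y + p y)
            - ∑ k, u k y * maxwellT (fun k => b k y) k j) j x)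
        = ε * slap (fun y => r y * (e y + hsq u y) + hsq b y) x)
    (hind : ∀ i, bt i
        + (∑ j, spd (fun y => u j y * b i y - b j y * u i y) j x)
        = ε * slap (b i) x) :
    r x * et + r x * (∑ j, u j x * spd e j x) + e x * (ε * slap r x)
      = ε * slap (fun y => r y * e y) x - p x * (∑ j, spd (u j) j x)
        + ε * r x * (∑ i, ∑ j, (spd (u i) j x) ^ 2) + ε * (∑ i, ∑ j, (spd (b i) j x) ^ 2) := by
  have dr := cd_da hr x
  have de := cd_da he x
  have dp := hp x
  have du := fun i => cd_da (hu i) x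
  have db := fun i => cd_da (hb i) x
  have cQ := hsq_cd hu
  have cK := hsq_cd hb
  have dQ := cd_da cQ x
  have dK := cd_da cK x
  have sQ := fun j => hsq_spd hu j x
  have sK := fun j => hsq_spd hb j x
  have lQ := hsq_slap hu x
  have lK := hsq_slap hb x
  -- mass
  have hmass' : (∑ j, spd (fun y => r y * u j y) j x)
      = r x * (∑ j, spd (u j) j x) + ∑ j, u j x * spd r j x := by
    rw [Finset.mul_sum, ← Finset.sum_add_distrib]
    exact Finset.sum_congr rfl fun j _ => spd_mul' dr (du j) j
  -- momentum
  have hM : ∀ i, r x * ut i + r x * (∑ j, u j x * spd (u i) j x) + spd p i x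
      - (∑ j, b j x * spd (b i) j x) + spd (hsq b) i x
      = ε * (r x * slap (u i) x + 2 * ∑ j, spd r j x * spd (u i) j x) := by
    intro i
    have h1 : (∑ j, spd (fun y => r y * u i y * u j y
            + (if i = j then p y else 0) - maxwellT (fun k => b k y) i j) j x)
        = u i x * (∑ j, spd (fun y => r y * u j y) j x) + r x * (∑ j, u j x * spd (u i) j x)
          + spd p i x - (∑ j, b j x * spd (b i) j x) - b i x * (∑ j, spd (b j) j x)
          + spd (hsq b) i x := by
      have h2 : ∀ j, spd (fun y => r y * u i y * u j y
            + (if i = j then p y else 0) - maxwellT (fun k => b k y) i j) j x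
          = u i x * spd (fun y => r y * u j y) j x + r x * (u j x * spd (u i) j x)
            + (if i = j then spd p j x else 0) - b j x * spd (b i) j x - b i x * spd (b j) j x
            + (if i = j then spd (hsq b) j x else 0) := by
        intro j
        simp only [maxwellT_eq]
        by_cases hij : i = j
        · simp only [hij, if_true]
          rw [spd_sub' (by fun_prop) (by fun_prop), spd_add' (by fun_prop) (by fun_prop),
            spd_sub' (by fun_prop) (by fun_prop),
            spd_mul' (f := fun y => r y * u j y) (by fun_prop) (du j), spd_mul' (db j) (db j)]
          ring
        · simp only [hij, if_false, add_zero, sub_zero]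
          rw [spd_sub' (by fun_prop) (by fun_prop), 
            spd_mul' (f := fun y => r y * u i y) (by fun_prop) (du j), spd_mul' (db i) (db j),
            spd_mul' dr (du i), spd_mul' dr (du j)]
          ring
      rw [Finset.sum_congr rfl fun j _ => h2 j]
      simp only [Finset.sum_add_distrib, Finset.sum_sub_distrib, Finset.mul_sum,
        Finset.sum_ite_eq, Finset.mem_univ, if_true]
    have h3 := hmom i
    rw [h1, slap_mul' hr (hu i), hdivB] at h3
    linear_combination h3 - u i x * hmass
  -- induction
  have hI : ∀ i, bt i + (∑ j, u j x * spd (b i) j x) + b i x * (∑ j, spd (u j) j x)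
      - (∑ j, b j x * spd (u i) j x) = ε * slap (b i) x := by
    intro i
    have h1 : (∑ j, spd (fun y => u j y * b i y - b j y * u i y) j x)
        = (∑ j, u j x * spd (b i) j x) + b i x * (∑ j, spd (u j) j x)
      - (∑ j, b j x * spd (u i) j x) - u i x * (∑ j, spd (b j) j x) := by
      simp only [Finset.mul_sum, ← Finset.sum_add_distrib, ← Finset.sum_sub_distrib]
      refine Finset.sum_congr rfl fun j _ => ?_
      rw [spd_sub' (by fun_prop) (by fun_prop), spd_mul' (du j) (db i), spd_mul' (db j) (du i)]
      ring
    have h3 := hind i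
    rw [h1, hdivB] at h3
    linear_combination h3
  -- energy
  have hc : ∀ j, spd (fun y => ∑ k, u k y * b k y) j x
      = (∑ i, u i x * spd (b i) j x) + ∑ i, b i x * spd (u i) j x := by
    intro j
    rw [spd_sum' (f := fun k y => u k y * b k y) (fun k => (du k).mul (db k)),
      ← Finset.sum_add_distrib]
    exact Finset.sum_congr rfl fun k _ => spd_mul' (du k) (db k) j
  have hE1 : (∑ j, spd (fun y => u j y * (r y * (e y + hsq u y) + hsq b y + p y)
            - ∑ k, u k y * maxwellT (fun k => b k y) k j) j x)
      = (e x + hsq u x) * (∑ j, spd (fun y => r y * u j y) j x)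
        + r x * (∑ j, u j x * spd e j x) + r x * (∑ j, u j x * spd (hsq u) j x)
        + (2 * hsq b x + p x) * (∑ j, spd (u j) j x)
        + 2 * (∑ j, u j x * spd (hsq b) j x) + (∑ j, u j x * spd p j x)
        - (∑ j, b j x * spd (fun y => ∑ k, u k y * b k y) j x)
        - (∑ k, u k x * b k x) * (∑ j, spd (b j) j x) := by
    simp only [Finset.mul_sum (s := Finset.univ) (f := fun j => spd _ j x), Finset.mul_sum
      (s := Finset.univ) (f := fun j => u j x * _), ← Finset.sum_add_distrib,
      ← Finset.sum_sub_distrib]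
    refine Finset.sum_congr rfl fun j _ => ?_
    have h2 : (fun y => u j y * (r y * (e y + hsq u y) + hsq b y + p y)
            - ∑ k, u k y * maxwellT (fun k => b k y) k j)
        = fun y => ((r y * u j y) * (e y + hsq u y) + u j y * (hsq b y + hsq b y + p y))
            - b j y * (∑ k, u k y * b k y) := by
      funext y
      simp only [maxwellT_eq, mul_sub, Finset.sum_sub_distrib, mul_ite, mul_zero,
        Finset.sum_ite_eq', Finset.mem_univ, if_true]
      have : ∑ k, u k y * (b k y * b j y) = b j y * ∑ k, u k y * b k y := by
        rw [Finset.mul_sum]; exact Finset.sum_congr rfl fun k _ => by ring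
      rw [this]; ring
    have dc : DifferentiableAt ℝ (fun y => ∑ k, u k y * b k y) x := by fun_prop
    rw [h2, spd_sub' (by fun_prop) (by fun_prop), spd_add' (by fun_prop) (by fun_prop),
      spd_mul' (f := fun y => r y * u j y) (by fun_prop) (by fun_prop),
      spd_mul' (du j) (by fun_prop), spd_mul' (db j) dc, spd_add' de dQ,
      spd_add' (by fun_prop) dp, spd_add' dK dK]
    ring
  have hE2 : slap (fun y => r y * (e y + hsq u y) + hsq b y) x
      = slap (fun y => r y * e y) x + (r x * slap (hsq u) x
        + 2 * (∑ j, spd r j x * spd (hsq u) j x) + hsq u x * slap r x) + slap (hsq b) x := by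
    rw [slap_add' (hr.mul (he.add cQ)) cK, ← slap_mul' hr cQ, ← slap_add' (hr.mul he) (hr.mul cQ)]
    simp only [mul_add]
  rw [hE1, hE2, hdivB] at hener
  -- kinetic energy
  have hQ : r x * (∑ i, u i x * ut i) + r x * (∑ j, u j x * spd (hsq u) j x)
      + (∑ j, u j x * spd p j x) - (∑ i, ∑ j, u i x * (b j x * spd (b i) j x))
      + (∑ j, u j x * spd (hsq b) j x)
      = ε * (r x * (∑ i, u i x * slap (u i) x) + 2 * ∑ j, spd r j x * spd (hsq u) j x) := by
    have h1 : (∑ j, u j x * spd (hsq u) j x) = ∑ i, u i x * ∑ j, u j x * spd (u i) j x := by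
      simp only [sQ, Finset.mul_sum]
      rw [Finset.sum_comm]
      exact Finset.sum_congr rfl fun i _ => Finset.sum_congr rfl fun j _ => by ring
    have h2 : (∑ j, spd r j x * spd (hsq u) j x) = ∑ i, u i x * ∑ j, spd r j x * spd (u i) j x := by
      simp only [sQ, Finset.mul_sum]
      rw [Finset.sum_comm]
      exact Finset.sum_congr rfl fun i _ => Finset.sum_congr rfl fun j _ => by ring
    rw [h1, h2]
    simp only [← Finset.mul_sum (s := Finset.univ) (f := fun j => b j x * _)]
    have h3 : ∑ i, u i x * (r x * ut i + r x * (∑ j, u j x * spd (u i) j x) + spd p i x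
      - (∑ j, b j x * spd (b i) j x) + spd (hsq b) i x)
      = ∑ i, u i x * (ε * (r x * slap (u i) x + 2 * ∑ j, spd r j x * spd (u i) j x)) :=
      Finset.sum_congr rfl fun i _ => by rw [hM i]
    have h4 : ∀ i, u i x * (r x * ut i + r x * (∑ j, u j x * spd (u i) j x) + spd p i x
      - (∑ j, b j x * spd (b i) j x) + spd (hsq b) i x)
      = r x * (u i x * ut i) + r x * (u i x * ∑ j, u j x * spd (u i) j x) + u i x * spd p i x
      - u i x * (∑ j, b j x * spd (b i) j x) + u i x * spd (hsq b) i x := fun i => by ring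
    have h5 : ∀ i, u i x * (ε * (r x * slap (u i) x + 2 * ∑ j, spd r j x * spd (u i) j x))
      = ε * r x * (u i x * slap (u i) x) + 2 * ε * (u i x * ∑ j, spd r j x * spd (u i) j x) :=
      fun i => by ring
    rw [Finset.sum_congr rfl fun i _ => h4 i, Finset.sum_congr rfl fun i _ => h5 i] at h3
    simp only [Finset.sum_add_distrib, Finset.sum_sub_distrib, ← Finset.mul_sum] at h3
    linear_combination h3
  -- magnetic energy
  have hK : (∑ i, b i x * bt i) + (∑ j, u j x * spd (hsq b) j x)
      + 2 * hsq b x * (∑ j, spd (u j) j x) - (∑ i, ∑ j, b i x * (b j x * spd (u i) j x))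
      = ε * ∑ i, b i x * slap (b i) x := by
    have h1 : (∑ j, u j x * spd (hsq b) j x) = ∑ i, b i x * ∑ j, u j x * spd (b i) j x := by
      simp only [sK, Finset.mul_sum]
      rw [Finset.sum_comm]
      exact Finset.sum_congr rfl fun i _ => Finset.sum_congr rfl fun j _ => by ring
    have h2 : 2 * hsq b x = ∑ i, b i x ^ 2 := by unfold hsq; ring
    rw [h1, h2, Finset.sum_mul, Finset.mul_sum]
    simp only [← Finset.sum_add_distrib, ← Finset.sum_sub_distrib]
    refine Finset.sum_congr rfl fun i _ => ?_
    rw [← Finset.mul_sum]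
    linear_combination b i x * hI i
  have hB : (∑ j, b j x * spd (fun y => ∑ k, u k y * b k y) j x)
      = (∑ i, ∑ j, u i x * (b j x * spd (b i) j x))
        + (∑ i, ∑ j, b i x * (b j x * spd (u i) j x)) := by
    rw [Finset.sum_comm, Finset.sum_comm (f := fun i j => b i x * (b j x * spd (u i) j x)),
      ← Finset.sum_add_distrib]
    refine Finset.sum_congr rfl fun j _ => ?_
    rw [hc, mul_add, Finset.mul_sum, Finset.mul_sum]
    congr 1 <;> exact Finset.sum_congr rfl fun i _ => by ring
  rw [hB, lQ, lK] at hener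
  linear_combination hener - hQ - hK - (e x + hsq u x) * hmass

theorem fderiv_pair (S : ℝ × ℝ → ℝ) (q : ℝ × ℝ) (a c : ℝ) :
    fderiv ℝ S q (a, c) = Sd1 S q * a + Sd2 S q * c := by
  have h : ((a, c) : ℝ × ℝ) = a • ((1 : ℝ), (0 : ℝ)) + c • ((0 : ℝ), (1 : ℝ)) := by simp
  rw [h, map_add, map_smul, map_smul]
  simp only [Sd1, Sd2, smul_eq_mul]
  ring

theorem Sd1_cd {S : ℝ × ℝ → ℝ} (hS : ContDiff ℝ 2 S) : ContDiff ℝ 1 (Sd1 S) := by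
  unfold Sd1
  exact (hS.fderiv_right (m := 1) (by norm_num)).clm_apply contDiff_const

theorem Sd2_cd {S : ℝ × ℝ → ℝ} (hS : ContDiff ℝ 2 S) : ContDiff ℝ 1 (Sd2 S) := by
  unfold Sd2
  exact (hS.fderiv_right (m := 1) (by norm_num)).clm_apply contDiff_const

theorem spd_comp {S : ℝ × ℝ → ℝ} (hS : ContDiff ℝ 2 S) {r e : (Fin d → ℝ) → ℝ} {x : Fin d → ℝ}
    (hr : DifferentiableAt ℝ r x) (he : DifferentiableAt ℝ e x) (j : Fin d) :
    spd (fun y => S (r y, e y)) j x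
      = Sd1 S (r x, e x) * spd r j x + Sd2 S (r x, e x) * spd e j x := by
  have h1 := (((hS.differentiable (by norm_num)) (r x, e x)).hasFDerivAt).comp x
    (hr.hasFDerivAt.prodMk he.hasFDerivAt)
  have h2 : fderiv ℝ (fun y => S (r y, e y)) x = _ := h1.fderiv
  unfold spd
  rw [h2, ← fderiv_pair]
  rfl

theorem deriv_comp_pair {S : ℝ × ℝ → ℝ} (hS : ContDiff ℝ 2 S) {r e : ℝ → ℝ} {t : ℝ}
    (hr : DifferentiableAt ℝ r t) (he : DifferentiableAt ℝ e t) :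
    deriv (fun y => S (r y, e y)) t
      = Sd1 S (r t, e t) * deriv r t + Sd2 S (r t, e t) * deriv e t := by
  have h1 := (((hS.differentiable (by norm_num)) (r t, e t)).hasFDerivAt).comp_hasDerivAt t
    (hr.hasDerivAt.prodMk he.hasDerivAt)
  have h2 : deriv (fun y => S (r y, e y)) t = _ := h1.deriv
  rw [h2, ← fderiv_pair]

theorem entropy_core (ε : ℝ) (S : ℝ × ℝ → ℝ) (hS : ContDiff ℝ 2 S)
    (r e : (Fin d → ℝ) → ℝ) (u : Fin d → ℝ) (hr : ContDiff ℝ 2 r) (he : ContDiff ℝ 2 e)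
    (rt et P G H D : ℝ) (x : Fin d → ℝ)
    (heos : P * Sd2 S (r x, e x) + (r x) ^ 2 * Sd1 S (r x, e x) = 0)
    (hmass : rt + (r x * D + ∑ j, u j * spd r j x) = ε * slap r x)
    (hen : r x * et + r x * (∑ j, u j * spd e j x) + e x * (ε * slap r x)
      = ε * slap (fun y => r y * e y) x - P * D + ε * r x * G + ε * H) :
    r x * ((Sd1 S (r x, e x) * rt + Sd2 S (r x, e x) * et)
          + ∑ i, u i * spd (fun y => S (r y, e y)) i x)
        - (∑ j, spd (fun y => r y * ε * spd (fun z => S (r z, e z)) j y) j x)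
        - (∑ i, (ε * spd r i x)
            * spd (fun y => e y * Sd2 S (r y, e y) - r y * Sd1 S (r y, e y)) i x)
        + (∑ i, (ε * spd (fun y => r y * e y) i x) * spd (fun y => Sd2 S (r y, e y)) i x)
        - ε * r x * Sd2 S (r x, e x) * G - ε * Sd2 S (r x, e x) * H = 0 := by
  have dr := cd_da hr x
  have de := cd_da he x
  have da : DifferentiableAt ℝ (fun y => Sd1 S (r y, e y)) x :=
    DifferentiableAt.comp (g := Sd1 S) (f := fun y => (r y, e y)) x
      (((Sd1_cd hS).differentiable (by norm_num)) (r x, e x)) (dr.prodMk de)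
  have dc : DifferentiableAt ℝ (fun y => Sd2 S (r y, e y)) x :=
    DifferentiableAt.comp (g := Sd2 S) (f := fun y => (r y, e y)) x
      (((Sd2_cd hS).differentiable (by norm_num)) (r x, e x)) (dr.prodMk de)
  have hre : ContDiff ℝ 2 (fun y => r y * e y) := hr.mul he
  have h1 : ∑ i, u i * spd (fun y => S (r y, e y)) i x
      = Sd1 S (r x, e x) * (∑ i, u i * spd r i x) + Sd2 S (r x, e x) * ∑ i, u i * spd e i x := by
    rw [Finset.mul_sum, Finset.mul_sum, ← Finset.sum_add_distrib]
    refine Finset.sum_congr rfl fun i _ => ?_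
    rw [spd_comp hS dr de]; ring
  have h2 : (∑ j, spd (fun y => r y * ε * spd (fun z => S (r z, e z)) j y) j x)
      = ε * (r x * Sd1 S (r x, e x) - e x * Sd2 S (r x, e x)) * slap r x
        + ε * Sd2 S (r x, e x) * slap (fun y => r y * e y) x
        - (∑ i, (ε * spd r i x)
            * spd (fun y => e y * Sd2 S (r y, e y) - r y * Sd1 S (r y, e y)) i x)
        + (∑ i, (ε * spd (fun y => r y * e y) i x) * spd (fun y => Sd2 S (r y, e y)) i x) := by
    unfold slap
    rw [Finset.mul_sum, Finset.mul_sum, ← Finset.sum_add_distrib, ← Finset.sum_sub_distrib,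
      ← Finset.sum_add_distrib]
    refine Finset.sum_congr rfl fun j _ => ?_
    have h3 : (fun y => r y * ε * spd (fun z => S (r z, e z)) j y)
        = fun y => (ε * Sd2 S (r y, e y)) * spd (fun y => r y * e y) j y
          - (ε * spd r j y) * (e y * Sd2 S (r y, e y) - r y * Sd1 S (r y, e y)) := by
      funext y
      rw [spd_comp hS (cd_da hr y) (cd_da he y), spd_mul' (cd_da hr y) (cd_da he y)]
      ring
    have s1 := spd_da hr j x
    have s2 := spd_da hre j x
    have s0 : spd (fun _ : Fin d → ℝ => ε) j x = 0 := by simp [spd]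
    rw [h3, spd_sub' (by fun_prop) (by fun_prop),
      spd_mul' (f := fun y => ε * Sd2 S (r y, e y)) (by fun_prop) s2,
      spd_mul' (f := fun y => ε * spd r j y) (by fun_prop) (by fun_prop),
      spd_mul' (f := fun _ => ε) (by fun_prop) dc, spd_mul' (f := fun _ => ε) (by fun_prop) s1, s0]
    ring
  rw [h1, h2]
  linear_combination Sd2 S (r x, e x) * hen + r x * Sd1 S (r x, e x) * hmass - D * heos

end Helpers

/-- for smooth positive-density solutions of the monolithic-regularized ideal
MHD system with `∇·B = 0` and equation of state `p S_e + ρ² S_ρ = 0`, the entropy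
field `s = S(ρ,e)` satisfies pointwise
`ρ(∂ₜs + u·∇s) − ∇·(ρε∇s) − ε∇ρ·∇[(e S_e − ρ S_ρ)∘(ρ,e)] + ε∇(ρe)·∇[S_e∘(ρ,e)]
  − ερ S_e |∇u|² − ε S_e |∇B|² = 0`. -/
theorem stmt_6 {d : ℕ} (hd : 1 ≤ d) (ε : ℝ) (hε : 0 < ε)
    (ρ E p : (Fin d → ℝ) → ℝ → ℝ) (m B : (Fin d → ℝ) → ℝ → Fin d → ℝ)
    (S : ℝ × ℝ → ℝ) (hS : ContDiff ℝ 2 S)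
    (hρpos : ∀ x t, 0 < ρ x t)
    (hρx : ∀ t, ContDiff ℝ 2 fun x => ρ x t) (hρt : ∀ x, ContDiff ℝ 1 fun t => ρ x t)
    (hmx : ∀ t i, ContDiff ℝ 2 fun x => m x t i) (hmt : ∀ x i, ContDiff ℝ 1 fun t => m x t i)
    (hEx : ∀ t, ContDiff ℝ 2 fun x => E x t) (hEt : ∀ x, ContDiff ℝ 1 fun t => E x t)
    (hBx : ∀ t i, ContDiff ℝ 2 fun x => B x t i) (hBt : ∀ x i, ContDiff ℝ 1 fun t => B x t i)
    (hpx : ∀ t, ContDiff ℝ 1 fun x => p x t)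
    (heos : ∀ (x : Fin d → ℝ) (t : ℝ), 0 < t →
      p x t * Sd2 S (ρ x t, specE ρ E m B x t)
        + (ρ x t) ^ 2 * Sd1 S (ρ x t, specE ρ E m B x t) = 0)
    (hdivB : ∀ (x : Fin d → ℝ) (t : ℝ), 0 < t → (∑ j, spd (fun y => B y t j) j x) = 0)
    (hmass : ∀ (x : Fin d → ℝ) (t : ℝ), 0 < t →
      deriv (fun τ => ρ x τ) t + (∑ j, spd (fun y => m y t j) j x)
        = ε * slap (fun y => ρ y t) x)
    (hmom : ∀ (x : Fin d → ℝ) (t : ℝ), 0 < t → ∀ i,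
      deriv (fun τ => m x τ i) t
        + (∑ j, spd (fun y => m y t i * (m y t j / ρ y t)
            + (if i = j then p y t else 0) - maxwellT (B y t) i j) j x)
        = ε * slap (fun y => m y t i) x)
    (hener : ∀ (x : Fin d → ℝ) (t : ℝ), 0 < t →
      deriv (fun τ => E x τ) t
        + (∑ j, spd (fun y => (m y t j / ρ y t) * (E y t + p y t)
            - ∑ k, (m y t k / ρ y t) * maxwellT (B y t) k j) j x)
        = ε * slap (fun y => E y t) x)
    (hind : ∀ (x : Fin d → ℝ) (t : ℝ), 0 < t → ∀ i,
      deriv (fun τ => B x τ i) t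
        + (∑ j, spd (fun y => (m y t j / ρ y t) * B y t i - B y t j * (m y t i / ρ y t)) j x)
        = ε * slap (fun y => B y t i) x) :
    ∀ (x : Fin d → ℝ) (t : ℝ), 0 < t →
      ρ x t * (deriv (fun τ => S (ρ x τ, specE ρ E m B x τ)) t
          + ∑ i, (m x t i / ρ x t) * spd (fun y => S (ρ y t, specE ρ E m B y t)) i x)
        - (∑ j, spd (fun y => ρ y t * ε * spd (fun z => S (ρ z t, specE ρ E m B z t)) j y) j x)
        - (∑ i, (ε * spd (fun y => ρ y t) i x)
            * spd (fun y => specE ρ E m B y t * Sd2 S (ρ y t, specE ρ E m B y t)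
                - ρ y t * Sd1 S (ρ y t, specE ρ E m B y t)) i x)
        + (∑ i, (ε * spd (fun y => ρ y t * specE ρ E m B y t) i x)
            * spd (fun y => Sd2 S (ρ y t, specE ρ E m B y t)) i x)
        - ε * ρ x t * Sd2 S (ρ x t, specE ρ E m B x t)
            * (∑ i, ∑ j, (spd (fun y => m y t i / ρ y t) j x) ^ 2)
        - ε * Sd2 S (ρ x t, specE ρ E m B x t)
            * (∑ i, ∑ j, (spd (fun y => B y t i) j x) ^ 2) = 0 := by
  intro x t ht
  have hne : ∀ y τ, ρ y τ ≠ 0 := fun y τ => (hρpos y τ).ne'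
  have cu : ∀ i, ContDiff ℝ 2 (fun y => m y t i / ρ y t) := fun i =>
    (hmx t i).div (hρx t) (fun y => hne y t)
  have ce : ContDiff ℝ 2 (fun y => specE ρ E m B y t) := by
    unfold specE
    refine ContDiff.div ?_ (hρx t) (fun y => hne y t)
    refine ((hEx t).sub ?_).sub ?_
    · exact (((hρx t).mul (ContDiff.sum fun i _ => (cu i).pow 2)).div_const 2)
    · exact (ContDiff.sum fun i _ => (hBx t i).pow 2).div_const 2
  have dρt : DifferentiableAt ℝ (fun τ => ρ x τ) t := (hρt x).differentiable (by norm_num) t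
  have dEt : DifferentiableAt ℝ (fun τ => E x τ) t := (hEt x).differentiable (by norm_num) t
  have dBt : ∀ i, DifferentiableAt ℝ (fun τ => B x τ i) t :=
    fun i => (hBt x i).differentiable (by norm_num) t
  have dut : ∀ i, DifferentiableAt ℝ (fun τ => m x τ i / ρ x τ) t :=
    fun i => ((hmt x i).differentiable (by norm_num) t).fun_div dρt (hne x t)
  have det : DifferentiableAt ℝ (fun τ => specE ρ E m B x τ) t := by
    unfold specE
    refine DifferentiableAt.fun_div ?_ dρt (hne x t)
    fun_prop
  have hm : ∀ y τ i, m y τ i = ρ y τ * (m y τ i / ρ y τ) := fun y τ i => by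
    field_simp [hne y τ]
  have hE : ∀ y τ, E y τ = ρ y τ * (specE ρ E m B y τ + (∑ i, (m y τ i / ρ y τ) ^ 2) / 2)
      + (∑ i, (B y τ i) ^ 2) / 2 := fun y τ => by
    have : ρ y τ * specE ρ E m B y τ
      = E y τ - ρ y τ * (∑ i, (m y τ i / ρ y τ) ^ 2) / 2 - (∑ i, (B y τ i) ^ 2) / 2 := by
      unfold specE; exact mul_div_cancel₀ _ (hne y τ)
    linear_combination -this
  have hmt' : ∀ i, deriv (fun τ => m x τ i) t = deriv (fun τ => ρ x τ) t * (m x t i / ρ x t)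
      + ρ x t * deriv (fun τ => m x τ i / ρ x τ) t := fun i => by
    rw [← deriv_fun_mul dρt (dut i)]
    exact congrArg (fun f => deriv f t) (funext fun τ => hm x τ i)
  have hsqd : ∀ v : Fin d → ℝ → ℝ, (∀ i, DifferentiableAt ℝ (v i) t) →
      HasDerivAt (fun τ => (∑ i, (v i τ) ^ 2) / 2) (∑ i, v i t * deriv (v i) t) t := by
    intro v hv
    have h := (HasDerivAt.fun_sum (u := Finset.univ)
      (fun i _ => ((hv i).hasDerivAt.fun_pow 2))).div_const 2
    refine HasDerivAt.congr_deriv h ?_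
    rw [Finset.sum_div]
    exact Finset.sum_congr rfl fun i _ => by simp; ring
  have hEt' : deriv (fun τ => E x τ) t
      = deriv (fun τ => ρ x τ) t * (specE ρ E m B x t + (∑ i, (m x t i / ρ x t) ^ 2) / 2)
        + ρ x t * (deriv (fun τ => specE ρ E m B x τ) t
          + ∑ i, (m x t i / ρ x t) * deriv (fun τ => m x τ i / ρ x τ) t)
        + ∑ i, B x t i * deriv (fun τ => B x τ i) t := by
    rw [show (fun τ => E x τ) = _ from funext fun τ => hE x τ]
    exact ((dρt.hasDerivAt.fun_mul (det.hasDerivAt.fun_add (hsqd _ dut))).fun_add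
      (hsqd (fun i τ => B x τ i) dBt)).deriv
  have hmass0 := hmass x t ht
  rw [Finset.sum_congr rfl fun j _ =>
    congrArg (fun f => spd f j x) (funext fun y => hm y t j)] at hmass0
  have hc := core ε (fun y => ρ y t) (fun y => specE ρ E m B y t) (fun y => p y t)
    (fun i y => m y t i / ρ y t) (fun i y => B y t i) (hρx t) ce
    ((hpx t).differentiable (by norm_num)) cu (hBx t) (deriv (fun τ => ρ x τ) t)
    (deriv (fun τ => specE ρ E m B x τ) t) (fun i => deriv (fun τ => m x τ i / ρ x τ) t)
    (fun i => deriv (fun τ => B x τ i) t) x (hdivB x t ht) hmass0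
    (by
      intro i
      have h := hmom x t ht i
      rw [hmt' i] at h
      simp only [← hm]
      exact h)
    (by
      have h := hener x t ht
      rw [hEt'] at h
      simp only [hsq, ← hE]
      exact h)
    (hind x t ht)
  have hmass1 : (∑ j, spd (fun y => ρ y t * (m y t j / ρ y t)) j x)
      = ρ x t * (∑ j, spd (fun y => m y t j / ρ y t) j x)
        + ∑ j, (m x t j / ρ x t) * spd (fun y => ρ y t) j x := by
    rw [Finset.mul_sum, ← Finset.sum_add_distrib]
    exact Finset.sum_congr rfl fun j _ => spd_mul' (cd_da (hρx t) x) (cd_da (cu j) x) j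
  rw [hmass1] at hmass0
  rw [deriv_comp_pair hS dρt det]
  exact entropy_core ε S hS (fun y => ρ y t) (fun y => specE ρ E m B y t)
    (fun j => m x t j / ρ x t) (hρx t) ce _ _ (p x t) _ _ _ x (heos x t ht) hmass0 hc
end

section
/- Let ρ : ℝ^d × [0,T] → ℝ be continuous and positive, let u : ℝ^d × [0,T] → ℝ^d be continuous, let ε > 0, and let s : ℝ^d × [0,T] → ℝ be continuous, twice continuously differentiable in space and continuously differentiable in time on ℝ^d × (0,T), and satisfy the pointwise inequality ρ(∂_t s + u·∇s) − ∇·(ε ρ ∇s) − ε ∇ρ·∇s ≥ 0 (with ρ continuously differentiable in space). Assume there are a compact set K ⊂ ℝ^d and a constant s* such that s(x,t) = s* for all x ∉ K and all t ∈ [0,T]. Then for every t ∈ [0,T], inf_{x ∈ ℝ^d} s(x,t) ≥ inf_{x ∈ ℝ^d} s(x,0) (minimum entropy principle). -/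
open scoped BigOperators

theorem second_deriv_nonneg_of_min (φ : ℝ → ℝ) (hc : Continuous φ)
    (hmin : ∀ h, φ 0 ≤ φ h) : 0 ≤ deriv (deriv φ) 0 := by
  by_contra hneg
  push Not at hneg
  have h1 : IsLocalMin φ 0 := Filter.Eventually.of_forall hmin
  have h2 : IsLocalMax φ 0 := isLocalMax_of_deriv_deriv_neg hneg h1.deriv_eq_zero hc.continuousAt
  have h3 : φ =ᶠ[nhds 0] fun _ => φ 0 := by
    filter_upwards [h2] with x hx
    exact le_antisymm hx (hmin x)
  have h4 := h3.deriv.deriv_eq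
  simp at h4
  linarith

theorem spd_spd_nonneg {d : ℕ} (f : (Fin d → ℝ) → ℝ) (hf : ContDiff ℝ 2 f) (x : Fin d → ℝ)
    (hmin : ∀ y, f x ≤ f y) (j : Fin d) : 0 ≤ spd (fun y => spd f j y) j x := by
  have key : ∀ (g : (Fin d → ℝ) → ℝ), Differentiable ℝ g → ∀ h : ℝ,
      deriv (fun h : ℝ => g (x + h • Pi.single j (1:ℝ))) h
        = spd g j (x + h • Pi.single j (1:ℝ)) := by
    intro g hg h
    have hl : HasDerivAt (fun h : ℝ => x + h • (Pi.single j (1:ℝ) : Fin d → ℝ))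
        (Pi.single j (1:ℝ)) h := by
      simpa using ((hasDerivAt_id h).smul_const (Pi.single j (1:ℝ) : Fin d → ℝ)).const_add x
    exact ((hg _).hasFDerivAt.comp_hasDerivAt h hl).deriv
  have hfd : Differentiable ℝ f := hf.differentiable (by norm_num)
  have hgd : Differentiable ℝ (fun y => spd f j y) := by
    unfold spd
    have := (hf.fderiv_right (m := 1) (by norm_num)).differentiable (by norm_num)
    exact this.clm_apply (differentiable_const _)
  have := second_deriv_nonneg_of_min (fun h : ℝ => f (x + h • Pi.single j (1:ℝ)))
    (by have := hf.continuous; fun_prop) (by intro h; simpa using hmin _)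
  have e : deriv (fun h : ℝ => f (x + h • Pi.single j (1:ℝ)))
      = fun h : ℝ => spd f j (x + h • Pi.single j (1:ℝ)) := funext (key f hfd)
  rw [e, key _ hgd] at this
  simpa using this

theorem spd_eq_zero_of_min {d : ℕ} (f : (Fin d → ℝ) → ℝ) (x : Fin d → ℝ)
    (hmin : ∀ y, f x ≤ f y) (j : Fin d) : spd f j x = 0 := by
  have h1 : IsLocalMin f x := Filter.Eventually.of_forall hmin
  simp [spd, h1.fderiv_eq_zero]

theorem deriv_le_of_left_min (f : ℝ → ℝ) (t δ : ℝ) (ht : 0 < t) (hf : DifferentiableAt ℝ f t)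
    (h : ∀ r ∈ Set.Icc 0 t, f t + δ * t ≤ f r + δ * r) : deriv f t ≤ -δ := by
  have hd := hf.hasDerivAt.hasDerivWithinAt (s := Set.Iio t)
  rw [hasDerivWithinAt_iff_tendsto_slope' (by simp)] at hd
  refine le_of_tendsto hd ?_
  have : Set.Ioo 0 t ∈ nhdsWithin t (Set.Iio t) := Ioo_mem_nhdsLT ht
  filter_upwards [this] with r hr
  have := h r ⟨hr.1.le, hr.2.le⟩
  rw [slope_def_field, div_le_iff_of_neg (by linarith [hr.2])]
  linarith

/-- minimum entropy principle: if a continuous entropy field `s` on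
`ℝ^d × [0,T]`, smooth on `ℝ^d × (0,T)`, satisfies the entropy production inequality
`ρ(∂ₜs + u·∇s) − ∇·(ερ∇s) − ε∇ρ·∇s ≥ 0` with positive continuous `ρ`, continuous `u`,
and is constant `= s*` outside a compact set `K` for all times, then
`inf_x s(x,t) ≥ inf_x s(x,0)` for every `t ∈ [0,T]`. -/
theorem stmt_11 {d : ℕ} (hd : 1 ≤ d) (T : ℝ) (hT : 0 < T) (ε : ℝ) (hε : 0 < ε)
    (ρ s : (Fin d → ℝ) → ℝ → ℝ) (u : (Fin d → ℝ) → ℝ → Fin d → ℝ)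
    (hρcont : ContinuousOn (fun q : (Fin d → ℝ) × ℝ => ρ q.1 q.2)
      (Set.univ ×ˢ Set.Icc 0 T))
    (hρpos : ∀ x, ∀ t ∈ Set.Icc (0 : ℝ) T, 0 < ρ x t)
    (hucont : ContinuousOn (fun q : (Fin d → ℝ) × ℝ => u q.1 q.2)
      (Set.univ ×ˢ Set.Icc 0 T))
    (hscont : ContinuousOn (fun q : (Fin d → ℝ) × ℝ => s q.1 q.2)
      (Set.univ ×ˢ Set.Icc 0 T))
    (hsx : ∀ t ∈ Set.Ioo (0 : ℝ) T, ContDiff ℝ 2 fun x => s x t)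
    (hst : ∀ x, ContDiffOn ℝ 1 (fun t => s x t) (Set.Ioo 0 T))
    (hρx : ∀ t ∈ Set.Ioo (0 : ℝ) T, ContDiff ℝ 1 fun x => ρ x t)
    (hineq : ∀ (x : Fin d → ℝ), ∀ t ∈ Set.Ioo (0 : ℝ) T,
      ρ x t * (deriv (fun τ => s x τ) t + ∑ i, u x t i * spd (fun y => s y t) i x)
        - (∑ j, spd (fun y => ε * ρ y t * spd (fun z => s z t) j y) j x)
        - ε * (∑ j, spd (fun y => ρ y t) j x * spd (fun y => s y t) j x) ≥ 0)
    (K : Set (Fin d → ℝ)) (hK : IsCompact K) (sstar : ℝ)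
    (hout : ∀ x ∉ K, ∀ t ∈ Set.Icc (0 : ℝ) T, s x t = sstar) :
    ∀ t ∈ Set.Icc (0 : ℝ) T, (⨅ x : Fin d → ℝ, s x 0) ≤ ⨅ x : Fin d → ℝ, s x t := by
  have hsl : ∀ t ∈ Set.Icc (0:ℝ) T, Continuous (fun x => s x t) := by
    intro t ht
    have := hscont.comp_continuous (f := fun x : Fin d → ℝ => (x, t)) (by fun_prop)
      (fun x => ⟨trivial, ht⟩)
    exact this
  have h0 : (0:ℝ) ∈ Set.Icc 0 T := ⟨le_rfl, hT.le⟩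
  have hbdd : BddBelow (Set.range fun x => s x 0) := by
    obtain ⟨b, hb⟩ := hK.bddBelow_image (hsl 0 h0).continuousOn
    refine ⟨min b sstar, ?_⟩
    rintro _ ⟨x, rfl⟩
    by_cases hx : x ∈ K
    · exact (min_le_left _ _).trans (hb ⟨x, hx, rfl⟩)
    · simp [hout x hx 0 h0]
  have : Nonempty (Fin d) := ⟨⟨0, hd⟩⟩
  obtain ⟨z, hz⟩ : ∃ z, z ∉ K := by
    by_contra hcon
    push Not at hcon
    exact noncompact_univ (Fin d → ℝ) ((Set.eq_univ_of_forall hcon) ▸ hK)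
  set m := ⨅ x : Fin d → ℝ, s x 0 with hm
  have hm0 : ∀ x, m ≤ s x 0 := fun x => ciInf_le hbdd x
  have hmstar : m ≤ sstar := by
    have := hm0 z
    rwa [hout z hz 0 h0] at this
  -- interior times
  have main : ∀ t ∈ Set.Ioo (0:ℝ) T, ∀ x, m ≤ s x t := by
    intro t1 ht1 x1
    by_contra hlt
    push Not at hlt
    obtain ⟨δ, hδ, hδ1⟩ : ∃ δ > 0, s x1 t1 + δ * t1 < m := by
      refine ⟨(m - s x1 t1) / (2 * t1), div_pos (by linarith) (by linarith [ht1.1]), ?_⟩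
      have : (m - s x1 t1) / (2 * t1) * t1 = (m - s x1 t1) / 2 := by
        have := ht1.1.ne'
        field_simp
      linarith
    have hx1 : x1 ∈ K := by
      by_contra hx
      rw [hout x1 hx t1 ⟨ht1.1.le, ht1.2.le⟩] at hlt
      linarith
    have hcv : ContinuousOn (fun q : (Fin d → ℝ) × ℝ => s q.1 q.2 + δ * q.2)
        (K ×ˢ Set.Icc 0 t1) :=
      (hscont.mono (Set.prod_mono (Set.subset_univ _)
        (Set.Icc_subset_Icc_right ht1.2.le))).add (by fun_prop)
    obtain ⟨⟨x0, t0⟩, ⟨hx0, ht0⟩, hmin⟩ := (hK.prod isCompact_Icc).exists_isMinOn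
      ⟨(x1, t1), hx1, ht1.1.le, le_rfl⟩ hcv
    simp only at hx0 ht0
    have hmin' : ∀ x ∈ K, ∀ t ∈ Set.Icc 0 t1, s x0 t0 + δ * t0 ≤ s x t + δ * t :=
      fun x hx t ht => hmin (show (x, t) ∈ K ×ˢ Set.Icc 0 t1 from ⟨hx, ht⟩)
    have hv := hmin' x1 hx1 t1 ⟨ht1.1.le, le_rfl⟩
    have ht0pos : 0 < t0 := by
      rcases ht0.1.eq_or_lt with h | h
      · rw [← h] at hv
        linarith [hm0 x0]
      · exact h
    have ht0I : t0 ∈ Set.Ioo 0 T := ⟨ht0pos, ht0.2.trans_lt ht1.2⟩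
    have hglob : ∀ y, s x0 t0 ≤ s y t0 := by
      intro y
      by_cases hy : y ∈ K
      · linarith [hmin' y hy t0 ht0]
      · rw [hout y hy t0 ⟨ht0I.1.le, ht0I.2.le⟩]
        have := mul_pos hδ ht0pos
        linarith
    have hdt : deriv (fun τ => s x0 τ) t0 ≤ -δ := by
      refine deriv_le_of_left_min _ t0 δ ht0pos ?_ ?_
      · exact ((hst x0).differentiableOn (by norm_num)).differentiableAt
          (isOpen_Ioo.mem_nhds ht0I)
      · intro r hr
        exact hmin' x0 hx0 r ⟨hr.1, hr.2.trans ht0.2⟩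
    have hg0 : ∀ j, spd (fun y => s y t0) j x0 = 0 :=
      fun j => spd_eq_zero_of_min (fun y => s y t0) x0 hglob j
    have hρp := hρpos x0 t0 ⟨ht0I.1.le, ht0I.2.le⟩
    have hdiv : ∀ j, 0 ≤ spd (fun y => ε * ρ y t0 * spd (fun z => s z t0) j y) j x0 := by
      intro j
      have hgd : Differentiable ℝ (fun y => spd (fun z => s z t0) j y) := by
        unfold spd
        have := ((hsx t0 ht0I).fderiv_right (m := 1) (by norm_num)).differentiable (by norm_num)
        exact this.clm_apply (differentiable_const _)
      have hρd : Differentiable ℝ (fun y => ε * ρ y t0) :=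
        ((hρx t0 ht0I).differentiable (by norm_num)).const_mul ε
      have e : spd (fun y => ε * ρ y t0 * spd (fun z => s z t0) j y) j x0
          = ε * ρ x0 t0 * spd (fun y => spd (fun z => s z t0) j y) j x0 := by
        have h1 := ((hρd x0).hasFDerivAt.mul (hgd x0).hasFDerivAt).fderiv
        have h2 := congrArg (fun L => L (Pi.single j (1:ℝ))) h1
        simp only [hg0 j, zero_smul, add_zero] at h2
        exact h2
      rw [e]
      exact mul_nonneg (mul_pos hε hρp).le
        (spd_spd_nonneg (fun z => s z t0) (hsx t0 ht0I) x0 hglob j)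
    have hfin := hineq x0 t0 ht0I
    simp only [hg0, mul_zero, Finset.sum_const_zero, add_zero, sub_zero] at hfin
    have hsum := Finset.sum_nonneg (fun j (_ : j ∈ Finset.univ) => hdiv j)
    have : ρ x0 t0 * deriv (fun τ => s x0 τ) t0 < 0 :=
      mul_neg_of_pos_of_neg hρp (by linarith)
    linarith
  intro t ht
  refine le_ciInf fun x => ?_
  rcases ht.1.eq_or_lt with h | hpos
  · rw [← h]; exact hm0 x
  rcases ht.2.lt_or_eq with h | h
  · exact main t ⟨hpos, h⟩ x
  subst h
  have hc : ContinuousOn (fun r => s x r) (Set.Icc 0 t) :=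
    hscont.comp (f := fun r : ℝ => (x, r)) (by fun_prop) (fun r hr => ⟨trivial, hr⟩)
  have hcl : Filter.Tendsto (fun r => s x r) (nhdsWithin t (Set.Ioo 0 t)) (nhds (s x t)) :=
    (hc t ht).mono_left (nhdsWithin_mono _ Set.Ioo_subset_Icc_self)
  rw [nhdsWithin_Ioo_eq_nhdsLT hpos] at hcl
  refine ge_of_tendsto hcl ?_
  filter_upwards [Ioo_mem_nhdsLT hpos] with r hr
  exact main r hr x
end

section
/- Let γ > 1, d ≥ 1 and let f : ℝ → ℝ be twice continuously differentiable with f'(y) > 0 and f'(y) − γ f''(y) > 0 for all y ∈ ℝ. On the open convex set Ω := {(ρ, m, E, B) ∈ ℝ × ℝ^d × ℝ × ℝ^d : ρ > 0 and E − |m|²/(2ρ) − |B|²/2 > 0}, define e(U) := (E − |m|²/(2ρ) − |B|²/2)/ρ, s(U) := ln e(U) − (γ−1) ln ρ, and F(U) := −ρ f(s(U)). Then F is strictly convex on Ω. -/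
open scoped BigOperators

/-- Specific internal energy `e(U) = (E − |m|²/(2ρ) − |B|²/2)/ρ` of an MHD state
`U = (ρ, m, E, B)`. -/
noncomputable def eState {d : ℕ} (U : ℝ × (Fin d → ℝ) × ℝ × (Fin d → ℝ)) : ℝ :=
  (U.2.2.1 - (∑ i, (U.2.1 i) ^ 2) / (2 * U.1) - (∑ i, (U.2.2.2 i) ^ 2) / 2) / U.1

/-- Ideal-gas specific entropy `s(U) = ln e(U) − (γ−1) ln ρ`. -/
noncomputable def sState (γ : ℝ) {d : ℕ} (U : ℝ × (Fin d → ℝ) × ℝ × (Fin d → ℝ)) : ℝ :=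
  Real.log (eState U) - (γ - 1) * Real.log U.1

/-- Generalized entropy `F(U) = −ρ f(s(U))`. -/
noncomputable def FState (γ : ℝ) (f : ℝ → ℝ) {d : ℕ}
    (U : ℝ × (Fin d → ℝ) × ℝ × (Fin d → ℝ)) : ℝ :=
  -(U.1 * f (sState γ U))


/-- The internal energy density. -/
noncomputable def epsAux {d : ℕ} (U : ℝ × (Fin d → ℝ) × ℝ × (Fin d → ℝ)) : ℝ :=
  U.2.2.1 - (∑ i, (U.2.1 i) ^ 2) / (2 * U.1) - (∑ i, (U.2.2.2 i) ^ 2) / 2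

lemma g_strictConcave (γ : ℝ) (hγ : 1 < γ) (f : ℝ → ℝ) (hf : ContDiff ℝ 2 f)
    (hf'' : ∀ y : ℝ, 0 < deriv f y - γ * deriv (deriv f) y) :
    StrictConcaveOn ℝ (Set.Ioi 0) (fun y => f (γ * Real.log y)) := by
  have hd1 : Differentiable ℝ f := hf.differentiable (by norm_num)
  have hd2 : Differentiable ℝ (deriv f) := by
    have h : ContDiff ℝ (1 + 1) f := by simpa [one_add_one_eq_two] using hf
    exact (contDiff_succ_iff_deriv.1 h).2.2.differentiable (by norm_num)
  have hl : ∀ y : ℝ, 0 < y → HasDerivAt (fun y => γ * Real.log y) (γ * y⁻¹) y := fun y hy =>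
    (Real.hasDerivAt_log hy.ne').const_mul γ
  have h1 : ∀ y : ℝ, 0 < y → HasDerivAt (fun y => f (γ * Real.log y))
      (deriv f (γ * Real.log y) * (γ * y⁻¹)) y := fun y hy =>
    (hd1 _).hasDerivAt.comp y (hl y hy)
  have h2 : ∀ y : ℝ, 0 < y → HasDerivAt (fun y => deriv f (γ * Real.log y))
      (deriv (deriv f) (γ * Real.log y) * (γ * y⁻¹)) y := fun y hy =>
    (hd2 _).hasDerivAt.comp y (hl y hy)
  apply strictConcaveOn_of_deriv2_neg (convex_Ioi 0)
  · intro y hy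
    exact (h1 y hy).continuousAt.continuousWithinAt
  · intro y hy
    rw [interior_Ioi] at hy
    have hy : 0 < y := hy
    have heq : deriv (fun y => f (γ * Real.log y)) =ᶠ[nhds y]
        fun y => deriv f (γ * Real.log y) * (γ * y⁻¹) := by
      filter_upwards [Ioi_mem_nhds hy] with z hz
      exact (h1 z hz).deriv
    have h3 := (h2 y hy).mul ((hasDerivAt_inv hy.ne').const_mul γ)
    simp only [Function.iterate_succ, Function.iterate_zero, Function.comp_apply, id]
    rw [heq.deriv_eq]
    erw [h3.deriv]
    have : deriv (deriv f) (γ * Real.log y) * (γ * y⁻¹) * (γ * y⁻¹) +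
        deriv f (γ * Real.log y) * (γ * -(y ^ 2)⁻¹) =
        -((γ * (y^2)⁻¹) * (deriv f (γ * Real.log y) - γ * deriv (deriv f) (γ * Real.log y))) := by
      field_simp
      ring
    rw [this]
    have := hf'' (γ * Real.log y)
    have : 0 < (γ * (y^2)⁻¹) := by positivity
    exact neg_neg_of_pos (by positivity)

lemma F_eq (γ : ℝ) (hγ : 1 < γ) (f : ℝ → ℝ) {d : ℕ}
    (U : ℝ × (Fin d → ℝ) × ℝ × (Fin d → ℝ)) (h1 : 0 < U.1) (h2 : 0 < epsAux U) :
    FState γ f U = -(U.1 * f (γ * Real.log ((epsAux U) ^ (1 / γ) / U.1))) := by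
  have : sState γ U = γ * Real.log ((epsAux U) ^ (1 / γ) / U.1) := by
    have he : eState U = epsAux U / U.1 := rfl
    rw [sState, he, Real.log_div h2.ne' h1.ne', Real.log_div (by positivity) h1.ne',
      Real.log_rpow h2]
    field_simp
    ring
  rw [FState, this]

lemma eps_gap {d : ℕ} (U V : ℝ × (Fin d → ℝ) × ℝ × (Fin d → ℝ)) (hU : 0 < U.1) (hV : 0 < V.1)
    (a b : ℝ) (ha : 0 < a) (hb : 0 < b) (hab : a + b = 1) :
    epsAux (a • U + b • V) = a * epsAux U + b * epsAux V +
      (a * b / (2 * U.1 * V.1 * (a * U.1 + b * V.1))) * ∑ i, (V.1 * U.2.1 i - U.1 * V.2.1 i) ^ 2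
      + (a * b / 2) * ∑ i, (U.2.2.2 i - V.2.2.2 i) ^ 2 := by
  obtain ⟨r, m, E, B⟩ := U
  obtain ⟨r', m', E', B'⟩ := V
  simp only [epsAux, Prod.smul_mk, Prod.mk_add_mk, smul_eq_mul, Pi.add_apply, Pi.smul_apply] at *
  have hR : 0 < a * r + b * r' := by positivity
  have e1 : (∑ i, (a * m i + b * m' i) ^ 2) / (2 * (a * r + b * r')) =
      a * ((∑ i, m i ^ 2) / (2 * r)) + b * ((∑ i, m' i ^ 2) / (2 * r')) -
      (a * b / (2 * r * r' * (a * r + b * r'))) * ∑ i, (r' * m i - r * m' i) ^ 2 := by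
    simp only [Finset.sum_div, Finset.mul_sum, ← Finset.sum_add_distrib, ← Finset.sum_sub_distrib]
    refine Finset.sum_congr rfl fun i _ => ?_
    field_simp
    ring
  have e2 : (∑ i, (a * B i + b * B' i) ^ 2) / 2 =
      a * ((∑ i, B i ^ 2) / 2) + b * ((∑ i, B' i ^ 2) / 2) -
      (a * b / 2) * ∑ i, (B i - B' i) ^ 2 := by
    simp only [Finset.sum_div, Finset.mul_sum, ← Finset.sum_add_distrib, ← Finset.sum_sub_distrib]
    refine Finset.sum_congr rfl fun i _ => ?_
    obtain rfl : b = 1 - a := by linarith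
    ring
  rw [e1, e2]
  ring

/-- if `f' > 0` and `f' − γ f'' > 0` everywhere, the generalized entropy
`F = −ρ f(s)` is strictly convex on the open convex set of admissible MHD states. -/
theorem stmt_14 (γ : ℝ) (hγ : 1 < γ) {d : ℕ} (hd : 1 ≤ d)
    (f : ℝ → ℝ) (hf : ContDiff ℝ 2 f)
    (hf' : ∀ y : ℝ, 0 < deriv f y)
    (hf'' : ∀ y : ℝ, 0 < deriv f y - γ * deriv (deriv f) y) :
    StrictConvexOn ℝ
      {U : ℝ × (Fin d → ℝ) × ℝ × (Fin d → ℝ) |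
        0 < U.1 ∧
        0 < U.2.2.1 - (∑ i, (U.2.1 i) ^ 2) / (2 * U.1) - (∑ i, (U.2.2.2 i) ^ 2) / 2}
      (FState γ f) := by
  have hγ0 : 0 < γ := by linarith
  have hg := g_strictConcave γ hγ f hf hf''
  have hfm : StrictMono f := strictMono_of_deriv_pos hf'
  have hp := Real.strictConcaveOn_rpow (p := 1 / γ) (by positivity)
    ((div_lt_one hγ0).2 hγ)
  refine ⟨?_, ?_⟩
  · rintro U ⟨hU1, hU2⟩ V ⟨hV1, hV2⟩ a b ha hb hab
    rcases ha.eq_or_lt with rfl | ha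
    · obtain rfl : b = 1 := by linarith
      simpa using And.intro hV1 hV2
    rcases hb.eq_or_lt with rfl | hb
    · obtain rfl : a = 1 := by linarith
      simpa using And.intro hU1 hU2
    have hr : 0 < a * U.1 + b * V.1 := by positivity
    refine ⟨hr, ?_⟩
    change 0 < epsAux (a • U + b • V)
    change 0 < epsAux U at hU2
    change 0 < epsAux V at hV2
    rw [eps_gap U V hU1 hV1 a b ha hb hab]
    positivity
  · rintro U ⟨hU1, hU2⟩ V ⟨hV1, hV2⟩ hne a b ha hb hab
    change 0 < epsAux U at hU2
    change 0 < epsAux V at hV2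
    have hr : 0 < a * U.1 + b * V.1 := by positivity
    have hgap := eps_gap U V hU1 hV1 a b ha hb hab
    set S1 := ∑ i, (V.1 * U.2.1 i - U.1 * V.2.1 i) ^ 2 with hS1
    set S2 := ∑ i, (U.2.2.2 i - V.2.2.2 i) ^ 2 with hS2
    have hS1n : 0 ≤ S1 := Finset.sum_nonneg fun i _ => sq_nonneg _
    have hS2n : 0 ≤ S2 := Finset.sum_nonneg fun i _ => sq_nonneg _
    have hc : 0 < a * b / (2 * U.1 * V.1 * (a * U.1 + b * V.1)) := by positivity
    have hc2 : 0 < a * b / 2 := by positivity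
    have hW : 0 < epsAux (a • U + b • V) := by rw [hgap]; positivity
    have hW1 : (a • U + b • V).1 = a * U.1 + b * V.1 := rfl
    rw [F_eq γ hγ f _ (by rw [hW1]; exact hr) hW, F_eq γ hγ f U hU1 hU2, F_eq γ hγ f V hV1 hV2,
      hW1]
    set w := epsAux (a • U + b • V) ^ (1 / γ) with hw
    set w1 := epsAux U ^ (1 / γ) with hw1
    set w2 := epsAux V ^ (1 / γ) with hw2
    have pw1 : 0 < w1 := by positivity
    have pw2 : 0 < w2 := by positivity
    have pm : 0 < a * w1 + b * w2 := by positivity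
    have hge : a * epsAux U + b * epsAux V ≤ epsAux (a • U + b • V) := by
      rw [hgap]
      have := mul_nonneg hc.le hS1n
      have := mul_nonneg hc2.le hS2n
      linarith
    have hpos : 0 < a * epsAux U + b * epsAux V := by positivity
    have step1 : (a * epsAux U + b * epsAux V) ^ (1 / γ) ≤ w :=
      Real.rpow_le_rpow hpos.le hge (by positivity)
    have step2 : a * w1 + b * w2 ≤ (a * epsAux U + b * epsAux V) ^ (1 / γ) := by
      have := hp.concaveOn.2 (x := epsAux U) hU2.le (y := epsAux V) hV2.le ha.le hb.le hab
      simpa only [smul_eq_mul] using this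
    -- monotonicity of g
    have gmono : ∀ x y : ℝ, 0 < x → x < y → f (γ * Real.log x) < f (γ * Real.log y) :=
      fun x y hx hxy => hfm (mul_lt_mul_of_pos_left (Real.log_lt_log hx hxy) hγ0)
    have hA : 0 < a * U.1 / (a * U.1 + b * V.1) := by positivity
    have hB : 0 < b * V.1 / (a * U.1 + b * V.1) := by positivity
    have hAB : a * U.1 / (a * U.1 + b * V.1) + b * V.1 / (a * U.1 + b * V.1) = 1 := by
      field_simp
    have harg : a * U.1 / (a * U.1 + b * V.1) * (w1 / U.1) +
        b * V.1 / (a * U.1 + b * V.1) * (w2 / V.1) = (a * w1 + b * w2) / (a * U.1 + b * V.1) := by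
      field_simp
    have hval : ∀ x y : ℝ, (a * U.1 + b * V.1) * (a * U.1 / (a * U.1 + b * V.1) * x +
        b * V.1 / (a * U.1 + b * V.1) * y) = a * (U.1 * x) + b * (V.1 * y) := by
      intro x y
      field_simp
    have q1 : 0 < w1 / U.1 := by positivity
    have q2 : 0 < w2 / V.1 := by positivity
    have step3 := hg.concaveOn.2 (x := w1 / U.1) q1 (y := w2 / V.1) q2 hA.le hB.le hAB
    simp only [smul_eq_mul] at step3 ⊢
    rw [harg] at step3
    have step3' := mul_le_mul_of_nonneg_left step3 hr.le
    rw [hval] at step3'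
    by_cases hlt : a * w1 + b * w2 < w
    · have := gmono _ _ (by positivity) (div_lt_div_of_pos_right hlt hr)
      have := mul_lt_mul_of_pos_left this hr
      linarith
    have hEq : w = a * w1 + b * w2 := le_antisymm (not_lt.1 hlt) (step2.trans step1)
    have heps : epsAux U = epsAux V := by
      by_contra hcon
      have := hp.2 (x := epsAux U) hU2.le (y := epsAux V) hV2.le hcon ha hb hab
      simp only [smul_eq_mul] at this
      linarith
    have hgap0 : epsAux (a • U + b • V) ≤ a * epsAux U + b * epsAux V := by
      by_contra! hcon
      have := Real.rpow_lt_rpow hpos.le hcon (show 0 < 1 / γ by positivity)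
      linarith
    have hm1 := mul_nonneg hc.le hS1n
    have hm2 := mul_nonneg hc2.le hS2n
    have hS10 : S1 = 0 := by
      have h : a * b / (2 * U.1 * V.1 * (a * U.1 + b * V.1)) * S1 = 0 := by linarith
      exact (mul_eq_zero.1 h).resolve_left hc.ne'
    have hS20 : S2 = 0 := by
      have h : a * b / 2 * S2 = 0 := by linarith
      exact (mul_eq_zero.1 h).resolve_left hc2.ne'
    by_cases hrr : U.1 = V.1
    · exfalso
      apply hne
      rw [hS1, Finset.sum_eq_zero_iff_of_nonneg (fun i _ => sq_nonneg _)] at hS10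
      rw [hS2, Finset.sum_eq_zero_iff_of_nonneg (fun i _ => sq_nonneg _)] at hS20
      have hB' : U.2.2.2 = V.2.2.2 := by
        funext i
        have := pow_eq_zero_iff (two_ne_zero) |>.1 (hS20 i (Finset.mem_univ i))
        linarith
      have hM' : U.2.1 = V.2.1 := by
        funext i
        have := pow_eq_zero_iff (two_ne_zero) |>.1 (hS10 i (Finset.mem_univ i))
        rw [hrr, ← mul_sub] at this
        have := (mul_eq_zero.1 this).resolve_left hV1.ne'
        linarith
      have hE' : U.2.2.1 = V.2.2.1 := by
        unfold epsAux at heps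
        rw [hB', hM', hrr] at heps
        linarith
      exact Prod.ext hrr (Prod.ext hM' (Prod.ext hE' hB'))
    · have hww : w1 = w2 := by rw [hw1, hw2, heps]
      have hq : w1 / U.1 ≠ w2 / V.1 := by
        intro h
        rw [hww, div_eq_div_iff hU1.ne' hV1.ne'] at h
        exact hrr (mul_left_cancel₀ pw2.ne' h).symm
      have step4 := hg.2 (x := w1 / U.1) q1 (y := w2 / V.1) q2 hq hA hB hAB
      simp only [smul_eq_mul] at step4
      rw [harg] at step4
      have step4' := mul_lt_mul_of_pos_left step4 hr
      rw [hval] at step4'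
      rw [hEq]
      linarith
end
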